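/- Let d ≥ 2 and let μ₀, μ₁ be symmetric probability measures on ℤ whose moment generating functions t ↦ Σ_{j∈ℤ} e^{tj} μ_i({j}) are finite for all t ∈ (−R, R), where R > 0. Let (Y_v), indexed by the non-root vertices of the rooted Cayley tree of order d, be independent random variables, each distributed according to μ₀ or according to μ₁. Then the almost-sure limit H of the spherical averages H_r exists, E[exp(tH)] < ∞ for every real t with |t| < (d+1)R, and for every A with 0 < A < (d+1)R there exists B = B(A) < ∞ such that P(|H| ≥ s) ≤ B e^{−As} for all real s ≥ 0. -/

import Mathlib

open MeasureTheory ProbabilityTheory Filter Finset Topology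

noncomputable section

/-- A non-root vertex of the rooted Cayley tree of order `d`: the first step from the
root is one of `d+1` children, every further step one of `d` children. -/
abbrev Vertex (d : ℕ) : Type := Fin (d + 1) × List (Fin d)

/-- depth of a non-root vertex -/
def vdepth {d : ℕ} (v : Vertex d) : ℕ := v.2.length + 1

/-- the sphere `W_r` of radius `r ≥ 1`: all vertices of depth `r` -/
def sphereW (d r : ℕ) : Finset (Vertex d) :=
  (Finset.univ : Finset (Fin (d + 1) × (Fin (r - 1) → Fin d))).image
    (fun x => (x.1, List.ofFn x.2))

/-- height at `v`: sum of the increments along the path from the root to `v`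
(the prefixes of length `0,…,|v.2|` of the step list of `v` enumerate that path). -/
def heightAt {d : ℕ} {Ω : Type*} (Y : Vertex d → Ω → ℝ) (v : Vertex d) (ω : Ω) : ℝ :=
  ∑ k ∈ Finset.range (v.2.length + 1), Y (v.1, v.2.take k) ω

/-- spherical average `H_r` of the heights at depth `r` -/
def sphAvg (d : ℕ) {Ω : Type*} (Y : Vertex d → Ω → ℝ) (r : ℕ) (ω : Ω) : ℝ :=
  (((d + 1) * d ^ (r - 1) : ℕ) : ℝ)⁻¹ * ∑ v ∈ sphereW d r, heightAt Y v ω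

/-!
Each increment `Y v` with `v` at depth `k` enters `H_r`, `r ≥ k`, with the same weight `1 / |W_k|`,
so `H_r` is a weighted sum of independent variables over a ball. All weights are at most
`1 / (d + 1)`, so for `|t| ≤ A < (d + 1) R` the moment generating function of every increment is
evaluated on a compact subinterval of `(-R, R)`, where centring bounds it by `exp (K t ^ 2)` with
`K` depending only on `A`. The sum of the squared weights is `∑ 1 / |W_k| ≤ 2`, which bounds the
moment generating functions of all `H_r` at once; Fatou's lemma passes the bound to the limit and
Chernoff's inequality turns it into the tail estimate. Similarly `H_{k+1} - H_k` has squared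
weights summing to `1 / |W_{k+1}| ≤ 2 ^ (-k)`, so the `L¹` norms of these differences are summable
and `H_r` converges almost surely.
-/

/-! ### Random variables with exponential moments -/

lemma exp_mul_le_one_add_mul_add_sq {c : ℝ} (hc : |c| ≤ 1) (x : ℝ) :
    Real.exp (c * x) ≤ 1 + c * x + c ^ 2 * (Real.exp x + Real.exp (-x)) := by
  have hseries (y : ℝ) :
      HasSum (fun n : ℕ => y ^ (n + 2) / ((n + 2).factorial : ℝ)) (Real.exp y - (1 + y)) := by
    have h := (hasSum_nat_add_iff' 2).2 (NormedSpace.expSeries_div_hasSum_exp y)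
    simpa [Finset.sum_range_succ, ← Real.exp_eq_exp_ℝ] using h
  have hterm (n : ℕ) : (c * x) ^ (n + 2) / ((n + 2).factorial : ℝ) ≤
      c ^ 2 * (|x| ^ (n + 2) / ((n + 2).factorial : ℝ)) := by
    rw [← mul_div_assoc]
    gcongr
    calc (c * x) ^ (n + 2) ≤ |c| ^ n * (c ^ 2 * |x| ^ (n + 2)) := by
          rw [← sq_abs c, ← mul_assoc, ← pow_add, ← mul_pow, ← abs_mul, ← abs_pow]
          exact le_abs_self _
      _ ≤ c ^ 2 * |x| ^ (n + 2) :=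
          mul_le_of_le_one_left (by positivity) (pow_le_one₀ (abs_nonneg c) hc)
  have htail : Real.exp (c * x) - (1 + c * x) ≤ c ^ 2 * (Real.exp |x| - (1 + |x|)) :=
    hasSum_le hterm (hseries _) ((hseries _).mul_left _)
  have habs : Real.exp |x| - (1 + |x|) ≤ Real.exp x + Real.exp (-x) := by
    linarith [Real.exp_abs_le x, abs_nonneg x]
  linarith [mul_le_mul_of_nonneg_left habs (sq_nonneg c)]

/-- `X` is sub-exponential with parameters `(a, K)`: its moment generating function exists on
`[-a, a]` and is bounded there by the Gaussian one `t ↦ exp (K t ^ 2)`. Unlike for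
`ProbabilityTheory.HasSubgaussianMGF`, nothing is required outside `[-a, a]`. -/
structure IsSubExponential {Ω : Type*} [MeasurableSpace Ω] (X : Ω → ℝ) (a K : ℝ)
    (P : Measure Ω) : Prop where
  integrable_exp_mul : ∀ t : ℝ, |t| ≤ a → Integrable (fun ω => Real.exp (t * X ω)) P
  mgf_le : ∀ t : ℝ, |t| ≤ a → mgf X P t ≤ Real.exp (K * t ^ 2)

section

variable {Ω ι : Type*} [MeasurableSpace Ω] {P : Measure Ω}

lemma isSubExponential_of_integral_eq_zero [IsProbabilityMeasure P] {X : Ω → ℝ} {a C : ℝ}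
    (ha : 0 < a) (hmean : ∫ ω, X ω ∂P = 0)
    (hpos : Integrable (fun ω => Real.exp (a * X ω)) P)
    (hneg : Integrable (fun ω => Real.exp (-a * X ω)) P) (hC : mgf X P a + mgf X P (-a) ≤ C) :
    IsSubExponential X a (C / a ^ 2) P := by
  have hexp (t : ℝ) (ht : |t| ≤ a) : Integrable (fun ω => Real.exp (t * X ω)) P :=
    integrable_exp_mul_of_le_of_le hneg hpos (neg_le_of_abs_le ht) (le_of_abs_le ht)
  have hX : Integrable X P := by
    simpa using integrable_pow_of_integrable_exp_mul ha.ne' hpos hneg 1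
  refine ⟨hexp, fun t ht => ?_⟩
  have hlin : Integrable (fun ω => 1 + t * X ω) P := (integrable_const 1).add (hX.const_mul t)
  have hquad : Integrable
      (fun ω => (t / a) ^ 2 * (Real.exp (a * X ω) + Real.exp (-a * X ω))) P :=
    (hpos.add hneg).const_mul _
  calc mgf X P t
      ≤ ∫ ω, (1 + t * X ω + (t / a) ^ 2 * (Real.exp (a * X ω) + Real.exp (-a * X ω))) ∂P := by
        refine integral_mono (hexp t ht) (hlin.add hquad) fun ω => ?_
        have hta : |t / a| ≤ 1 := by rwa [abs_div, abs_of_pos ha, div_le_one ha]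
        have h := exp_mul_le_one_add_mul_add_sq hta (a * X ω)
        rwa [← mul_assoc, div_mul_cancel₀ _ ha.ne', ← neg_mul] at h
    _ = (t / a) ^ 2 * (mgf X P a + mgf X P (-a)) + 1 := by
        rw [integral_add hlin hquad, integral_add (integrable_const 1) (hX.const_mul t),
          integral_const_mul, integral_const_mul, integral_add hpos hneg, hmean, mgf, mgf]
        simp [add_comm]
    _ ≤ C / a ^ 2 * t ^ 2 + 1 := by
        rw [div_pow, div_mul_eq_mul_div, div_mul_eq_mul_div, mul_comm C]
        gcongr
    _ ≤ Real.exp (C / a ^ 2 * t ^ 2) := Real.add_one_le_exp _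

lemma exists_isSubExponential_of_iSup_lintegral_ne_top [IsProbabilityMeasure P] {X : ι → Ω → ℝ}
    (hmeas : ∀ i, AEMeasurable (X i) P) (hmean : ∀ i, ∫ ω, X i ω ∂P = 0) {a : ℝ} (ha : 0 < a)
    (hpos : ⨆ i, ∫⁻ ω, ENNReal.ofReal (Real.exp (a * X i ω)) ∂P ≠ ⊤)
    (hneg : ⨆ i, ∫⁻ ω, ENNReal.ofReal (Real.exp (-a * X i ω)) ∂P ≠ ⊤) :
    ∃ K : ℝ, 0 ≤ K ∧ ∀ i, IsSubExponential (X i) a K P := by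
  have hexp {t : ℝ} (ht : ⨆ i, ∫⁻ ω, ENNReal.ofReal (Real.exp (t * X i ω)) ∂P ≠ ⊤) (i : ι) :
      Integrable (fun ω => Real.exp (t * X i ω)) P ∧
        mgf (X i) P t ≤ (⨆ i, ∫⁻ ω, ENNReal.ofReal (Real.exp (t * X i ω)) ∂P).toReal := by
    have hle := le_iSup (fun i => ∫⁻ ω, ENNReal.ofReal (Real.exp (t * X i ω)) ∂P) i
    have hsm := aemeasurable_exp_mul t (hmeas i)
    have hnn : 0 ≤ᵐ[P] fun ω => Real.exp (t * X i ω) := ae_of_all _ fun ω => (Real.exp_pos _).le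
    refine ⟨(lintegral_ofReal_ne_top_iff_integrable hsm hnn).1 (ne_top_of_le_ne_top ht hle), ?_⟩
    rw [mgf, integral_eq_lintegral_of_nonneg_ae hnn hsm]
    exact ENNReal.toReal_mono ht hle
  refine ⟨_, ?_, fun i => isSubExponential_of_integral_eq_zero ha (hmean i) (hexp hpos i).1
    (hexp hneg i).1 (add_le_add (hexp hpos i).2 (hexp hneg i).2)⟩
  positivity

namespace IsSubExponential

variable {X : Ω → ℝ} {a K : ℝ}

lemma weighted_sum {X : ι → Ω → ℝ} (hX : ∀ i, IsSubExponential (X i) a K P)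
    (hindep : iIndepFun X P) (hmeas : ∀ i, Measurable (X i)) (hK : 0 ≤ K) {s : Finset ι}
    {w : ι → ℝ} {b S : ℝ} (hw : ∀ i ∈ s, |w i| * b ≤ a) (hS : ∑ i ∈ s, w i ^ 2 ≤ S) :
    IsSubExponential (fun ω => ∑ i ∈ s, w i * X i ω) b (K * S) P := by
  have := hindep.isProbabilityMeasure
  have hindep' : iIndepFun (fun i ω => w i * X i ω) P :=
    hindep.comp (fun i x => w i * x) fun i => measurable_const_mul _
  have hmeas' (i : ι) : Measurable fun ω => w i * X i ω := (hmeas i).const_mul _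
  have hwt {t : ℝ} (ht : |t| ≤ b) {i : ι} (hi : i ∈ s) : |w i * t| ≤ a := by
    rw [abs_mul]
    exact (mul_le_mul_of_nonneg_left ht (abs_nonneg _)).trans (hw i hi)
  rw [← Finset.sum_fn]
  refine ⟨fun t ht => hindep'.integrable_exp_mul_sum hmeas' fun i hi => ?_, fun t ht => ?_⟩
  · simpa only [mul_assoc, mul_left_comm] using (hX i).integrable_exp_mul _ (hwt ht hi)
  · calc mgf (∑ i ∈ s, fun ω => w i * X i ω) P t
        = ∏ i ∈ s, mgf (X i) P (w i * t) := by simp_rw [hindep'.mgf_sum hmeas' s, mgf_const_mul]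
      _ ≤ ∏ i ∈ s, Real.exp (K * (w i * t) ^ 2) :=
        Finset.prod_le_prod (fun _ _ => mgf_nonneg) fun i hi => (hX i).mgf_le _ (hwt ht hi)
      _ = Real.exp (K * (∑ i ∈ s, w i ^ 2) * t ^ 2) := by
        simp_rw [← Real.exp_sum, Finset.mul_sum, Finset.sum_mul, mul_pow, mul_assoc]
      _ ≤ Real.exp (K * S * t ^ 2) := by gcongr

lemma eLpNorm_one_le (hX : IsSubExponential X a K P) {t : ℝ} (ht : 0 < t) (hta : t ≤ a) :
    eLpNorm X 1 P ≤ ENNReal.ofReal (2 * Real.exp (K * t ^ 2) / t) := by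
  have hpos : |t| ≤ a := by rwa [abs_of_pos ht]
  have hneg : |-t| ≤ a := by rwa [abs_neg]
  have hint_pos := hX.integrable_exp_mul t hpos
  have hint_neg := hX.integrable_exp_mul (-t) hneg
  have hint : Integrable (fun ω => (Real.exp (t * X ω) + Real.exp (-t * X ω)) / t) P :=
    (hint_pos.add hint_neg).div_const t
  have hpointwise (ω : Ω) : |X ω| ≤ (Real.exp (t * X ω) + Real.exp (-t * X ω)) / t := by
    rw [le_div_iff₀ ht, neg_mul]
    calc |X ω| * t = |t * X ω| := by rw [abs_mul, abs_of_pos ht, mul_comm]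
      _ ≤ Real.exp |t * X ω| := by linarith [Real.add_one_le_exp |t * X ω|]
      _ ≤ Real.exp (t * X ω) + Real.exp (-(t * X ω)) := Real.exp_abs_le _
  calc eLpNorm X 1 P
      ≤ ∫⁻ ω, ENNReal.ofReal ((Real.exp (t * X ω) + Real.exp (-t * X ω)) / t) ∂P := by
        rw [eLpNorm_one_eq_lintegral_enorm]
        refine lintegral_mono fun ω => ?_
        rw [Real.enorm_eq_ofReal_abs]
        exact ENNReal.ofReal_le_ofReal (hpointwise ω)
    _ = ENNReal.ofReal ((mgf X P t + mgf X P (-t)) / t) := by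
        rw [← ofReal_integral_eq_lintegral_ofReal hint
          (ae_of_all _ fun ω => (abs_nonneg _).trans (hpointwise ω)), integral_div,
          integral_add hint_pos hint_neg, mgf, mgf]
    _ ≤ ENNReal.ofReal (2 * Real.exp (K * t ^ 2) / t) := by
        have h := hX.mgf_le (-t) hneg
        rw [neg_sq] at h
        rw [two_mul]
        gcongr
        exact hX.mgf_le t hpos

lemma of_tendsto {F : ℕ → Ω → ℝ} (hF : ∀ n, IsSubExponential (F n) a K P)
    (hlim : ∀ᵐ ω ∂P, Tendsto (fun n => F n ω) atTop (𝓝 (X ω))) : IsSubExponential X a K P := by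
  have hexp (t : ℝ) : ∀ᵐ ω ∂P,
      Tendsto (fun n => Real.exp (t * F n ω)) atTop (𝓝 (Real.exp (t * X ω))) := by
    filter_upwards [hlim] with ω hω
    exact (Real.continuous_exp.tendsto _).comp (hω.const_mul t)
  have hmeas {t : ℝ} (ht : |t| ≤ a) : AEStronglyMeasurable (fun ω => Real.exp (t * X ω)) P :=
    aestronglyMeasurable_of_tendsto_ae _ (fun n => ((hF n).integrable_exp_mul t ht).1) (hexp t)
  have hnonneg (t : ℝ) (Z : Ω → ℝ) : 0 ≤ᵐ[P] fun ω => Real.exp (t * Z ω) :=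
    ae_of_all _ fun ω => (Real.exp_pos _).le
  have hfatou {t : ℝ} (ht : |t| ≤ a) : ∫⁻ ω, ENNReal.ofReal (Real.exp (t * X ω)) ∂P ≤
      ENNReal.ofReal (Real.exp (K * t ^ 2)) := calc
    _ = ∫⁻ ω, liminf (fun n => ENNReal.ofReal (Real.exp (t * F n ω))) atTop ∂P := by
        refine lintegral_congr_ae ?_
        filter_upwards [hexp t] with ω hω
        exact (ENNReal.tendsto_ofReal hω).liminf_eq.symm
    _ ≤ liminf (fun n => ∫⁻ ω, ENNReal.ofReal (Real.exp (t * F n ω)) ∂P) atTop :=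
        lintegral_liminf_le' fun n =>
          ((hF n).integrable_exp_mul t ht).1.aemeasurable.ennreal_ofReal
    _ ≤ ENNReal.ofReal (Real.exp (K * t ^ 2)) := by
        refine liminf_le_of_frequently_le' (Frequently.of_forall fun n => ?_)
        rw [← ofReal_integral_eq_lintegral_ofReal ((hF n).integrable_exp_mul t ht) (hnonneg t _)]
        exact ENNReal.ofReal_le_ofReal ((hF n).mgf_le t ht)
  refine ⟨fun t ht => ?_, fun t ht => ?_⟩
  · exact (lintegral_ofReal_ne_top_iff_integrable (hmeas ht) (hnonneg t X)).1
      (ne_top_of_le_ne_top ENNReal.ofReal_ne_top (hfatou ht))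
  · rw [mgf, integral_eq_lintegral_of_nonneg_ae (hnonneg t X) (hmeas ht)]
    exact ENNReal.toReal_le_of_le_ofReal (Real.exp_pos _).le (hfatou ht)

lemma measure_le_abs_le [IsFiniteMeasure P] (hX : IsSubExponential X a K P) (ha : 0 ≤ a) (s : ℝ) :
    P {ω | s ≤ |X ω|} ≤ ENNReal.ofReal (2 * Real.exp (K * a ^ 2) * Real.exp (-a * s)) := by
  have hpos : |a| ≤ a := (abs_of_nonneg ha).le
  have hneg : |-a| ≤ a := by rwa [abs_neg]
  have hupper : P.real {ω | s ≤ X ω} ≤ Real.exp (-a * s) * Real.exp (K * a ^ 2) :=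
    (measure_ge_le_exp_mul_mgf s ha (hX.integrable_exp_mul a hpos)).trans <|
      mul_le_mul_of_nonneg_left (hX.mgf_le a hpos) (Real.exp_pos _).le
  have hlower : P.real {ω | X ω ≤ -s} ≤ Real.exp (-a * s) * Real.exp (K * a ^ 2) := by
    have h := measure_le_le_exp_mul_mgf (-s) (neg_nonpos.2 ha) (hX.integrable_exp_mul (-a) hneg)
    have hmgf := hX.mgf_le (-a) hneg
    rw [neg_neg, mul_neg, ← neg_mul] at h
    rw [neg_sq] at hmgf
    exact h.trans (mul_le_mul_of_nonneg_left hmgf (Real.exp_pos _).le)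
  rw [← ofReal_measureReal]
  refine ENNReal.ofReal_le_ofReal ?_
  calc P.real {ω | s ≤ |X ω|} = P.real ({ω | s ≤ X ω} ∪ {ω | X ω ≤ -s}) := by
        simp only [le_abs, le_neg, Set.ofPred_or]
    _ ≤ P.real {ω | s ≤ X ω} + P.real {ω | X ω ≤ -s} := measureReal_union_le _ _
    _ ≤ 2 * Real.exp (K * a ^ 2) * Real.exp (-a * s) := by linarith

end IsSubExponential

end

lemma iSup_lintegral_comp_ne_top_of_map_eq_or {Ω ι E : Type*} [MeasurableSpace Ω]
    [MeasurableSpace E] {P : Measure Ω} {Y : ι → Ω → E} (hmeas : ∀ i, AEMeasurable (Y i) P)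
    {μ ν : Measure E} (hlaw : ∀ i, P.map (Y i) = μ ∨ P.map (Y i) = ν) {f : E → ENNReal}
    (hf : Measurable f) (hμ : ∫⁻ x, f x ∂μ ≠ ⊤) (hν : ∫⁻ x, f x ∂ν ≠ ⊤) :
    ⨆ i, ∫⁻ ω, f (Y i ω) ∂P ≠ ⊤ := by
  refine ne_top_of_le_ne_top (max_ne_top hμ hν) (iSup_le fun i => ?_)
  rw [← lintegral_map' hf.aemeasurable (hmeas i)]
  rcases hlaw i with h | h <;> simp [h]

lemma integral_intCast_eq_zero_of_map_symm {Ω : Type*} [MeasurableSpace Ω] {P : Measure Ω}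
    {Y : Ω → ℤ} (hmeas : AEMeasurable Y P) (hsymm : ∀ j : ℤ, P.map Y {-j} = P.map Y {j}) :
    ∫ ω, (Y ω : ℝ) ∂P = 0 := by
  have : (P.map Y).IsNegInvariant := ⟨Measure.ext_of_singleton fun j => by
    rw [Measure.neg_apply, Set.neg_singleton, hsymm]⟩
  have hneg := integral_neg_eq_self (fun j : ℤ => (j : ℝ)) (P.map Y)
  simp only [Int.cast_neg, integral_neg] at hneg
  have hcast : Measurable fun j : ℤ => (j : ℝ) := .of_discrete
  rw [← integral_map hmeas hcast.aestronglyMeasurable]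
  linarith

/-! ### Spheres and balls -/

section

variable {d : ℕ}

lemma sum_sphereW_succ {M : Type*} [AddCommMonoid M] (k : ℕ) (F : Vertex d → M) :
    ∑ v ∈ sphereW d (k + 1), F v =
      ∑ i, ∑ f : Fin k → Fin d, F (i, List.ofFn f) := by
  rw [sphereW, Finset.sum_image, Fintype.sum_prod_type]
  · rfl
  · rintro ⟨i, f⟩ - ⟨j, g⟩ - h
    simpa [Prod.ext_iff, List.ofFn_injective.eq_iff] using h

lemma vdepth_eq_of_mem_sphereW {k : ℕ} {v : Vertex d} (hv : v ∈ sphereW d (k + 1)) :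
    vdepth v = k + 1 := by
  obtain ⟨x, -, rfl⟩ := Finset.mem_image.1 hv
  simp [vdepth]

lemma card_sphereW_succ (d k : ℕ) : #(sphereW d (k + 1)) = (d + 1) * d ^ k := by
  rw [Finset.card_eq_sum_ones, sum_sphereW_succ]
  simp

lemma sum_sphereW_take {M : Type*} [AddCommMonoid M] (k n : ℕ) (F : Vertex d → M) :
    ∑ v ∈ sphereW d (k + n + 1), F (v.1, v.2.take k) =
      d ^ n • ∑ v ∈ sphereW d (k + 1), F v := by
  have htake (i : Fin (d + 1)) : ∑ f : Fin (k + n) → Fin d, F (i, (List.ofFn f).take k) =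
      d ^ n • ∑ f : Fin k → Fin d, F (i, List.ofFn f) := by
    rw [← (Fin.appendEquiv k n).sum_comp, Fintype.sum_prod_type, Finset.smul_sum]
    refine Finset.sum_congr rfl fun f _ => ?_
    simp [Fin.appendEquiv, List.ofFn_fin_append]
  simp_rw [sum_sphereW_succ, htake, Finset.smul_sum]

/-- The weight `1 / |W_r|` with which the increment at a vertex `v` of depth `r` enters every
spherical average of radius at least `r`. -/
def sphereWeight (v : Vertex d) : ℝ := (#(sphereW d (vdepth v)) : ℝ)⁻¹

/-- The ball of radius `r` without the root: all vertices of depth `1, …, r`. -/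
def ballW (d r : ℕ) : Finset (Vertex d) :=
  (Finset.range r).biUnion fun k => sphereW d (k + 1)

lemma sum_ballW {M : Type*} [AddCommMonoid M] (r : ℕ) (F : Vertex d → M) :
    ∑ v ∈ ballW d r, F v = ∑ k ∈ Finset.range r, ∑ v ∈ sphereW d (k + 1), F v := by
  refine Finset.sum_biUnion fun j _ k _ hjk => Finset.disjoint_left.2 fun v hj hk => hjk ?_
  have h := (vdepth_eq_of_mem_sphereW hj).symm.trans (vdepth_eq_of_mem_sphereW hk)
  exact Nat.succ_injective h

lemma sphAvg_succ_eq_sum {Ω : Type*} (hd : d ≠ 0) (Y : Vertex d → Ω → ℝ) (r : ℕ) (ω : Ω) :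
    sphAvg d Y (r + 1) ω = ∑ v ∈ ballW d (r + 1), sphereWeight v * Y v ω := by
  have : (d : ℝ) ≠ 0 := Nat.cast_ne_zero.2 hd
  have hheight : ∑ v ∈ sphereW d (r + 1), heightAt Y v ω =
      ∑ k ∈ Finset.range (r + 1), ∑ v ∈ sphereW d (r + 1), Y (v.1, v.2.take k) ω := by
    rw [Finset.sum_comm]
    refine Finset.sum_congr rfl fun v hv => ?_
    rw [heightAt, ← vdepth, vdepth_eq_of_mem_sphereW hv]
  rw [sphAvg, hheight, sum_ballW, Finset.mul_sum]
  refine Finset.sum_congr rfl fun k hk => ?_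
  obtain ⟨n, rfl⟩ := Nat.exists_eq_add_of_le (Nat.lt_succ_iff.1 (Finset.mem_range.1 hk))
  rw [sum_sphereW_take k n fun v => Y v ω, nsmul_eq_mul, ← mul_assoc, Finset.mul_sum]
  refine Finset.sum_congr rfl fun v hv => ?_
  rw [sphereWeight, vdepth_eq_of_mem_sphereW hv, card_sphereW_succ, Nat.add_sub_cancel, pow_add]
  push_cast
  field_simp

lemma sphereWeight_nonneg (v : Vertex d) : 0 ≤ sphereWeight v := by
  rw [sphereWeight]; positivity

lemma sphereWeight_le_inv (hd : d ≠ 0) (v : Vertex d) : sphereWeight v ≤ ((d : ℝ) + 1)⁻¹ := by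
  rw [sphereWeight, vdepth, card_sphereW_succ]
  have : (1 : ℝ) ≤ d ^ v.2.length := one_le_pow₀ (Nat.one_le_cast.2 (Nat.one_le_iff_ne_zero.2 hd))
  push_cast
  gcongr
  exact le_mul_of_one_le_right (by positivity) this

lemma inv_card_sphereW_le (hd : 2 ≤ d) (k : ℕ) :
    (#(sphereW d (k + 1)) : ℝ)⁻¹ ≤ (1 / 2) ^ k := by
  rw [one_div, inv_pow, card_sphereW_succ]
  gcongr
  exact_mod_cast (Nat.pow_le_pow_left hd k).trans (Nat.le_mul_of_pos_left _ d.succ_pos)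

lemma sum_sphereW_sphereWeight_sq (k : ℕ) :
    ∑ v ∈ sphereW d (k + 1), sphereWeight v ^ 2 = (#(sphereW d (k + 1)) : ℝ)⁻¹ := by
  rw [Finset.sum_congr rfl fun v hv => by rw [sphereWeight, vdepth_eq_of_mem_sphereW hv],
    Finset.sum_const, nsmul_eq_mul, sq, ← mul_assoc]
  simpa only [inv_inv] using inv_mul_mul_self (#(sphereW d (k + 1)) : ℝ)⁻¹

lemma sum_ballW_sphereWeight_sq_le (hd : 2 ≤ d) (r : ℕ) :
    ∑ v ∈ ballW d r, sphereWeight v ^ 2 ≤ 2 := by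
  calc ∑ v ∈ ballW d r, sphereWeight v ^ 2
      = ∑ k ∈ Finset.range r, (#(sphereW d (k + 1)) : ℝ)⁻¹ := by
        simp_rw [sum_ballW, sum_sphereW_sphereWeight_sq]
    _ ≤ ∑ k ∈ Finset.range r, (1 / 2 : ℝ) ^ k :=
        Finset.sum_le_sum fun k _ => inv_card_sphereW_le hd k
    _ ≤ 2 := sum_geometric_two_le r

end

/-! ### Spherical averages of independent sub-exponential increments -/

section

variable {Ω : Type*} [MeasurableSpace Ω] {P : Measure Ω} {d : ℕ} {X : Vertex d → Ω → ℝ} {a K : ℝ}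

lemma eLpNorm_sum_sphereW_le (hd : 2 ≤ d) (ha : 0 < a) (hK : 0 ≤ K)
    (hX : ∀ v, IsSubExponential (X v) a K P) (hindep : iIndepFun X P)
    (hmeas : ∀ v, Measurable (X v)) (k : ℕ) :
    eLpNorm (fun ω => ∑ v ∈ sphereW d (k + 1), sphereWeight v * X v ω) 1 P ≤
      ENNReal.ofReal (2 * Real.exp (K * a ^ 2) / a * (√2)⁻¹ ^ k) := by
  have hsq : (√2 ^ k) ^ 2 = 2 ^ k := by rw [← pow_mul, mul_comm, pow_mul, Real.sq_sqrt zero_le_two]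
  have hweight (v) (hv : v ∈ sphereW d (k + 1)) : |sphereWeight v| * (a * √2 ^ k) ≤ a := by
    rw [abs_of_nonneg (sphereWeight_nonneg v), sphereWeight, vdepth_eq_of_mem_sphereW hv]
    calc (#(sphereW d (k + 1)) : ℝ)⁻¹ * (a * √2 ^ k) ≤ (1 / 2) ^ k * (a * 2 ^ k) := by
          gcongr
          · exact inv_card_sphereW_le hd k
          · exact Real.sqrt_le_self_iff.2 (Or.inr one_le_two)
      _ = a := by rw [mul_left_comm, ← mul_pow]; norm_num
  have hvar : ∑ v ∈ sphereW d (k + 1), sphereWeight v ^ 2 ≤ (1 / 2) ^ k :=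
    (sum_sphereW_sphereWeight_sq k).trans_le (inv_card_sphereW_le hd k)
  have h := IsSubExponential.weighted_sum hX hindep hmeas hK hweight hvar
  -- The weights leave room up to `t = a * 2 ^ k`; at `t = a * √2 ^ k` the exponent
  -- `K * (1 / 2) ^ k * t ^ 2` does not depend on `k`.
  refine (h.eLpNorm_one_le (by positivity) le_rfl).trans_eq ?_
  have hexp : K * (1 / 2) ^ k * (a * √2 ^ k) ^ 2 = K * a ^ 2 := by
    rw [mul_pow, hsq, one_div, inv_pow]; field_simp
  rw [hexp, inv_pow, div_mul_eq_div_div, div_eq_mul_inv _ (√2 ^ k)]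

lemma exists_ae_tendsto_sphAvg (hd : 2 ≤ d) (ha : 0 < a) (hK : 0 ≤ K)
    (hX : ∀ v, IsSubExponential (X v) a K P) (hindep : iIndepFun X P)
    (hmeas : ∀ v, Measurable (X v)) :
    ∃ H : Ω → ℝ, ∀ᵐ ω ∂P, Tendsto (fun r => sphAvg d X r ω) atTop (𝓝 (H ω)) := by
  let D (k : ℕ) (ω : Ω) : ℝ := ∑ v ∈ sphereW d (k + 1), sphereWeight v * X v ω
  have hgeom : Summable fun k : ℕ => 2 * Real.exp (K * a ^ 2) / a * (√2)⁻¹ ^ k :=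
    (summable_geometric_of_lt_one (by positivity)
      (inv_lt_one_of_one_lt₀ Real.one_lt_sqrt_two)).mul_left _
  have hnorm : ∑' k, eLpNorm (D k) 1 P ≠ ⊤ :=
    ne_top_of_le_ne_top hgeom.tsum_ofReal_ne_top <|
      ENNReal.tsum_le_tsum (eLpNorm_sum_sphereW_le hd ha hK hX hindep hmeas)
  have hD (k : ℕ) : AEStronglyMeasurable (D k) P := by fun_prop
  refine ⟨fun ω => ∑' k, D k ω, ?_⟩
  filter_upwards [summable_norm_of_tsum_eLpNorm_ne_top le_rfl hD hnorm] with ω hω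
  refine (tendsto_add_atTop_iff_nat 1).1 ?_
  simp_rw [sphAvg_succ_eq_sum (by omega : d ≠ 0), sum_ballW]
  exact (tendsto_add_atTop_iff_nat 1).2 hω.of_norm.hasSum.tendsto_sum_nat

lemma isSubExponential_sphAvg (hd : 2 ≤ d) (ha : 0 ≤ a) (hK : 0 ≤ K)
    (hX : ∀ v, IsSubExponential (X v) a K P) (hindep : iIndepFun X P)
    (hmeas : ∀ v, Measurable (X v)) (r : ℕ) :
    IsSubExponential (sphAvg d X (r + 1)) (((d : ℝ) + 1) * a) (K * 2) P := by
  have hd0 : d ≠ 0 := by omega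
  have hweight (v) (_ : v ∈ ballW d (r + 1)) : |sphereWeight v| * (((d : ℝ) + 1) * a) ≤ a := by
    rw [abs_of_nonneg (sphereWeight_nonneg v), ← mul_assoc]
    refine mul_le_of_le_one_left ha ?_
    rw [← le_inv_mul_iff₀' (by positivity)]
    simpa using sphereWeight_le_inv hd0 v
  rw [funext (sphAvg_succ_eq_sum hd0 X r)]
  exact IsSubExponential.weighted_sum hX hindep hmeas hK hweight
    (sum_ballW_sphereWeight_sq_le hd _)

end

theorem two_law_increments_exponential_tail_general
    {Ω : Type*} [MeasurableSpace Ω] {P : Measure Ω} {d : ℕ} (hd : 2 ≤ d) {R : ℝ} (hR : 0 < R)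
    {Y : Vertex d → Ω → ℝ} (hmeas : ∀ v, Measurable (Y v)) (hindep : iIndepFun Y P)
    (hmean : ∀ v, ∫ ω, Y v ω ∂P = 0)
    (hmgf : ∀ t : ℝ, |t| < R → ⨆ v, ∫⁻ ω, ENNReal.ofReal (Real.exp (t * Y v ω)) ∂P ≠ ⊤) :
    ∃ H : Ω → ℝ,
      (∀ᵐ ω ∂P, Tendsto (fun r => sphAvg d Y r ω) atTop (𝓝 (H ω))) ∧
      (∀ t : ℝ, |t| < ((d : ℝ) + 1) * R → Integrable (fun ω => Real.exp (t * H ω)) P) ∧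
      (∀ A : ℝ, 0 < A → A < ((d : ℝ) + 1) * R →
        ∃ B : ℝ, 0 ≤ B ∧ ∀ s : ℝ, 0 ≤ s →
          P {ω | s ≤ |H ω|} ≤ ENNReal.ofReal (B * Real.exp (-A * s))) := by
  have := hindep.isProbabilityMeasure
  have hincr {a : ℝ} (ha : 0 < a) (haR : a < R) :
      ∃ K : ℝ, 0 ≤ K ∧ ∀ v, IsSubExponential (Y v) a K P :=
    exists_isSubExponential_of_iSup_lintegral_ne_top (fun v => (hmeas v).aemeasurable) hmean ha
      (hmgf a (by rwa [abs_of_pos ha])) (hmgf (-a) (by rwa [abs_neg, abs_of_pos ha]))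
  obtain ⟨K₀, hK₀, hY₀⟩ := hincr (half_pos hR) (half_lt_self hR)
  obtain ⟨H, hH⟩ := exists_ae_tendsto_sphAvg hd (half_pos hR) hK₀ hY₀ hindep hmeas
  have hsub {A : ℝ} (hA : 0 < A) (hAR : A < ((d : ℝ) + 1) * R) :
      ∃ K, IsSubExponential H A K P := by
    obtain ⟨K, hK, hY⟩ := hincr (a := A / ((d : ℝ) + 1)) (by positivity)
      ((div_lt_iff₀' (by positivity)).2 hAR)
    refine ⟨K * 2, IsSubExponential.of_tendsto (F := fun r => sphAvg d Y (r + 1)) (fun r => ?_) ?_⟩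
    · have h := isSubExponential_sphAvg hd (by positivity) hK hY hindep hmeas r
      rwa [mul_div_cancel₀ A (by positivity)] at h
    · exact hH.mono fun ω hω => (tendsto_add_atTop_iff_nat 1).2 hω
  refine ⟨H, hH, fun t ht => ?_, fun A hA hAR => ?_⟩
  · obtain ⟨A, htA, hAR⟩ := exists_between ht
    obtain ⟨K, hK⟩ := hsub ((abs_nonneg t).trans_lt htA) hAR
    exact hK.integrable_exp_mul t htA.le
  · obtain ⟨K, hK⟩ := hsub hA hAR
    exact ⟨2 * Real.exp (K * A ^ 2), by positivity, fun s _ => hK.measure_le_abs_le hA.le s⟩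

/-- Independent increments each distributed according to one of two
symmetric laws `μ₀, μ₁` on `ℤ` whose mgfs are finite on `(-R,R)`: the a.s. limit `H` of the
spherical averages exists, has finite exponential moments of order `|t| < (d+1)R`, and
satisfies the exponential tail bound `P(|H| ≥ s) ≤ B e^{-As}` for every `0 < A < (d+1)R`. -/
theorem two_law_increments_exponential_tail
    {Ω : Type} [MeasurableSpace Ω] (P : Measure Ω) [IsProbabilityMeasure P]
    (d : ℕ) (hd : 2 ≤ d)
    (μ₀ μ₁ : Measure ℤ) [IsProbabilityMeasure μ₀] [IsProbabilityMeasure μ₁]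
    (hsymm₀ : ∀ j : ℤ, μ₀ {-j} = μ₀ {j}) (hsymm₁ : ∀ j : ℤ, μ₁ {-j} = μ₁ {j})
    (R : ℝ) (hR : 0 < R)
    (hmgf₀ : ∀ t : ℝ, |t| < R → ∫⁻ j : ℤ, ENNReal.ofReal (Real.exp (t * j)) ∂μ₀ ≠ ⊤)
    (hmgf₁ : ∀ t : ℝ, |t| < R → ∫⁻ j : ℤ, ENNReal.ofReal (Real.exp (t * j)) ∂μ₁ ≠ ⊤)
    (Y : Vertex d → Ω → ℤ) (hmeas : ∀ v, Measurable (Y v))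
    (hindep : iIndepFun Y P)
    (hlaw : ∀ v, Measure.map (Y v) P = μ₀ ∨ Measure.map (Y v) P = μ₁) :
    ∃ H : Ω → ℝ,
      (∀ᵐ ω ∂P, Tendsto (fun r => sphAvg d (fun v ω => (Y v ω : ℝ)) r ω) atTop (𝓝 (H ω))) ∧
      (∀ t : ℝ, |t| < ((d : ℝ) + 1) * R → Integrable (fun ω => Real.exp (t * H ω)) P) ∧
      (∀ A : ℝ, 0 < A → A < ((d : ℝ) + 1) * R →
        ∃ B : ℝ, 0 ≤ B ∧ ∀ s : ℝ, 0 ≤ s →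
          P {ω | s ≤ |H ω|} ≤ ENNReal.ofReal (B * Real.exp (-A * s))) :=
  two_law_increments_exponential_tail_general hd hR
    (fun v => Measurable.of_discrete.comp (hmeas v))
    (hindep.comp (fun _ (j : ℤ) => (j : ℝ)) fun _ => .of_discrete)
    (fun v => integral_intCast_eq_zero_of_map_symm (hmeas v).aemeasurable <|
      (hlaw v).elim (fun h => h ▸ hsymm₀) fun h => h ▸ hsymm₁)
    fun t ht => iSup_lintegral_comp_ne_top_of_map_eq_or (fun v => (hmeas v).aemeasurable) hlaw
      .of_discrete (hmgf₀ t ht) (hmgf₁ t ht)
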